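/- Let $K$ be an algebraically closed field and let $\Gamma$ be a finite tree with a fixed cyclic ordering of the edges incident to each vertex (a Brauer tree of multiplicity one). Let $Q$ be its Brauer quiver: the vertices of $Q$ are the edges of $\Gamma$, and for every edge $i$ and every end $x$ of $i$ there is an arrow from $i$ to the edge following $i$ in the cyclic ordering around $x$ (a loop if $x$ is a leaf); the arrows obtained from one vertex $x$ of $\Gamma$ form an oriented cycle of $Q$. Let $A = KQ/I$ be the basic Brauer tree algebra of $\Gamma$, where $ab$ denotes the path $a$ followed by $b$ and $I$ is generated by the products $ab$ of arrows belonging to the cycles of different vertices of $\Gamma$ and, for every edge $i$ of $\Gamma$ with ends $x,y$, by the difference of the two closed paths that start at $i$ and run once around the cycle of $x$, respectively of $y$. An $A$-cycle is a maximal ordered set of nonrepeating arrows of $Q$ such that the product in $A$ of any two neighboring arrows is nonzero; a vertex of $Q$ belongs to it if it is the source or the target of one of its arrows. Let $D^b(A)$ be the bounded derived category of finitely generated left $A$-modules. For a vertex $i$ of $Q$, with idempotent $e_i\in A$, the vertex corresponding to a stalk complex of the indecomposable projective module $Ae_i$ is $i$. Let $P_i$ and $P_j$ be stalk complexes of the indecomposable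 projective $A$-modules $Ae_i$ and $Ae_j$, each concentrated in (cohomological) degree $0$ or $1$. Then $\mathrm{Hom}_{D^b(A)}(P_i, P_j[-1]) = 0 = \mathrm{Hom}_{D^b(A)}(P_j, P_i[-1])$ if and only if one of the following holds: (1) the vertices corresponding to $P_i$ and $P_j$ do not belong to the same $A$-cycle; (2) the vertices corresponding to $P_i$ and $P_j$ belong to the same $A$-cycle and $P_i$, $P_j$ are concentrated in the same degree. -/

import Mathlib

open CategoryTheory

universe w u v

/-! ### Path algebras of finite quivers -/

section PathAlgebra

variable (K : Type*) [Field K] {I E : Type*} (s t : E → I)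

/-- The defining relations of the path algebra of a quiver with vertices `I`, arrows `E`, source `s`
and target `t`, on the free algebra generated by the vertices (`Sum.inl`) and arrows (`Sum.inr`).
Products are written in the order in which the arrows are traversed:
`a * b` is the path `a` followed by `b`. -/
inductive PathAlgebraRel : FreeAlgebra K (I ⊕ E) → FreeAlgebra K (I ⊕ E) → Prop
  | idem (i : I) : PathAlgebraRel
      (FreeAlgebra.ι K (Sum.inl i) * FreeAlgebra.ι K (Sum.inl i)) (FreeAlgebra.ι K (Sum.inl i))
  | orth (i j : I) (h : i ≠ j) : PathAlgebraRel
      (FreeAlgebra.ι K (Sum.inl i) * FreeAlgebra.ι K (Sum.inl j)) 0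
  | sum : PathAlgebraRel (∑ᶠ i : I, FreeAlgebra.ι K (Sum.inl i)) 1
  | source (a : E) : PathAlgebraRel
      (FreeAlgebra.ι K (Sum.inl (s a)) * FreeAlgebra.ι K (Sum.inr a)) (FreeAlgebra.ι K (Sum.inr a))
  | target (a : E) : PathAlgebraRel
      (FreeAlgebra.ι K (Sum.inr a) * FreeAlgebra.ι K (Sum.inl (t a))) (FreeAlgebra.ι K (Sum.inr a))

/-- The path algebra over `K` of a quiver with finitely many vertices. -/
def PathAlgebra : Type _ := RingQuot (PathAlgebraRel K s t)

namespace PathAlgebra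

noncomputable instance : Ring (PathAlgebra K s t) :=
  inferInstanceAs (Ring (RingQuot (PathAlgebraRel K s t)))

noncomputable instance : Algebra K (PathAlgebra K s t) :=
  inferInstanceAs (Algebra K (RingQuot (PathAlgebraRel K s t)))

/-- The quotient map from the free algebra. -/
noncomputable def proj : FreeAlgebra K (I ⊕ E) →ₐ[K] PathAlgebra K s t :=
  RingQuot.mkAlgHom K (PathAlgebraRel K s t)

/-- The trivial path at a vertex. -/
noncomputable def idem (i : I) : PathAlgebra K s t := proj K s t (FreeAlgebra.ι K (Sum.inl i))

/-- The path consisting of one arrow. -/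
noncomputable def arrow (a : E) : PathAlgebra K s t := proj K s t (FreeAlgebra.ι K (Sum.inr a))

end PathAlgebra

end PathAlgebra

/-! ### Brauer trees of multiplicity one and their algebras -/

/-- A Brauer tree of multiplicity one with vertex set `V`: a tree with a cyclic ordering of the
edges incident to each vertex. An edge `x - y` seen from its end `x` is the dart from `x` to `y`;
`next` sends an edge, seen from one of its ends, to the edge that follows it in the cyclic ordering
around that end. -/
structure BrauerTree (V : Type v) where
  /-- the underlying tree -/
  graph : SimpleGraph V
  isTree : graph.IsTree
  /-- the successor in the cyclic orderings -/
  next : Equiv.Perm graph.Dart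
  next_fst : ∀ d, (next d).fst = d.fst
  sameCycle : ∀ d d', d.fst = d'.fst → next.SameCycle d d'

namespace BrauerTree

variable {V : Type v} (T : BrauerTree V)

/-- The edges of the tree; they are the vertices of the Brauer quiver. -/
abbrev Edge : Type v := T.graph.edgeSet

/-- The arrows of the Brauer quiver: for every edge `i` incident to a vertex `x` of the tree there
is an arrow from `i` to the edge that follows `i` in the cyclic ordering around `x`
(a loop if `x` is a leaf). -/
abbrev Arrow : Type v := T.graph.Dart

/-- The source of an arrow. -/
def src (a : T.Arrow) : T.Edge := ⟨a.edge, a.edge_mem⟩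

/-- The target of an arrow. -/
def tgt (a : T.Arrow) : T.Edge := T.src (T.next a)

variable (K : Type u) [Field K]

/-- The path of length `m` starting with the arrow `a` and running around the cycle of the Brauer
quiver that contains `a`. -/
noncomputable def run (a : T.Arrow) (m : ℕ) : PathAlgebra K T.src T.tgt :=
  ((List.range m).map fun k => PathAlgebra.arrow K T.src T.tgt ((T.next ^ k) a)).prod

/-- The relations of the Brauer tree algebra of multiplicity one: the product of two arrows from
different cycles is zero, and for each edge the two cycles starting at this edge, traversed
once, are equal. (The number of arrows in the cycle around a vertex is the number of darts
starting at this vertex.) -/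
inductive Rel : PathAlgebra K T.src T.tgt → PathAlgebra K T.src T.tgt → Prop
  | zero (a b : T.Arrow) (h : a.fst ≠ b.fst) :
      Rel (PathAlgebra.arrow K T.src T.tgt a * PathAlgebra.arrow K T.src T.tgt b) 0
  | cycle (a : T.Arrow) :
      Rel (T.run K a (Nat.card {b : T.Arrow // b.fst = a.fst}))
        (T.run K a.symm (Nat.card {b : T.Arrow // b.fst = a.symm.fst}))

/-- The basic Brauer tree algebra over `K` of a Brauer tree of multiplicity one. -/
def BrauerAlgebra : Type (max u v) := RingQuot (T.Rel K)

noncomputable instance : Ring (T.BrauerAlgebra K) :=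
  inferInstanceAs (Ring (RingQuot (T.Rel K)))

noncomputable instance : Algebra K (T.BrauerAlgebra K) :=
  inferInstanceAs (Algebra K (RingQuot (T.Rel K)))

/-- The quotient map from the path algebra of the Brauer quiver. -/
noncomputable def proj : PathAlgebra K T.src T.tgt →ₐ[K] T.BrauerAlgebra K :=
  RingQuot.mkAlgHom K (T.Rel K)

/-- The idempotent `e_i` of the Brauer tree algebra. -/
noncomputable def e (i : T.Edge) : T.BrauerAlgebra K := T.proj K (PathAlgebra.idem K T.src T.tgt i)

/-- The class of an arrow in the Brauer tree algebra. -/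
noncomputable def arr (a : T.Arrow) : T.BrauerAlgebra K :=
  T.proj K (PathAlgebra.arrow K T.src T.tgt a)

/-! ### Cycles in the quiver of the algebra -/

/-- An ordered set of nonrepeating arrows such that the product of any two neighboring arrows is
nonzero in the algebra. -/
def IsArrowChain (L : List T.Arrow) : Prop :=
  L.Nodup ∧ L.IsChain fun a b => T.arr K a * T.arr K b ≠ 0

/-- An `A`-cycle: a maximal ordered set of nonrepeating arrows such that the product of any two
neighboring arrows is nonzero. -/
def IsACycle (L : List T.Arrow) : Prop :=
  T.IsArrowChain K L ∧ ∀ L', T.IsArrowChain K L' → L.Sublist L' → L' = L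

/-- The vertex `i` of the quiver belongs to the ordered set of arrows `L`. -/
def MemCycle (i : T.Edge) (L : List T.Arrow) : Prop :=
  ∃ a ∈ L, T.src a = i ∨ T.tgt a = i

/-- The vertices `i` and `j` of the quiver belong to the same `A`-cycle. -/
def OnCommonACycle (i j : T.Edge) : Prop :=
  ∃ L, T.IsACycle K L ∧ T.MemCycle i L ∧ T.MemCycle j L

/-! ### The algebra is finite-dimensional -/

lemma arr_mul_arr (a b : T.Arrow) (h : a.fst ≠ b.fst) : T.arr K a * T.arr K b = 0 := by
  have : T.proj K (PathAlgebra.arrow K T.src T.tgt a * PathAlgebra.arrow K T.src T.tgt b) =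
      T.proj K 0 := RingQuot.mkAlgHom_rel K (Rel.zero (T := T) (K := K) a b h)
  rwa [map_mul, map_zero] at this

lemma e_mul_e_self (i : T.Edge) : T.e K i * T.e K i = T.e K i := by
  have := congrArg (T.proj K)
    (RingQuot.mkAlgHom_rel K (PathAlgebraRel.idem (K := K) (s := T.src) (t := T.tgt) i))
  rw [map_mul] at this
  exact (map_mul (T.proj K) _ _).symm.trans this

lemma e_mul_e (i j : T.Edge) (h : i ≠ j) : T.e K i * T.e K j = 0 := by
  have := congrArg (T.proj K)
    (RingQuot.mkAlgHom_rel K (PathAlgebraRel.orth (K := K) (s := T.src) (t := T.tgt) i j h))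
  rw [map_mul, map_zero] at this
  exact (map_mul (T.proj K) _ _).symm.trans (this.trans (map_zero _))

lemma e_mul_arr (a : T.Arrow) : T.e K (T.src a) * T.arr K a = T.arr K a := by
  have := congrArg (T.proj K)
    (RingQuot.mkAlgHom_rel K (PathAlgebraRel.source (K := K) (s := T.src) (t := T.tgt) a))
  rw [map_mul] at this
  exact (map_mul (T.proj K) _ _).symm.trans this

lemma arr_mul_e (a : T.Arrow) : T.arr K a * T.e K (T.tgt a) = T.arr K a := by
  have := congrArg (T.proj K)
    (RingQuot.mkAlgHom_rel K (PathAlgebraRel.target (K := K) (s := T.src) (t := T.tgt) a))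
  rw [map_mul] at this
  exact (map_mul (T.proj K) _ _).symm.trans this

lemma finsum_e [Finite V] : ∑ᶠ i, T.e K i = 1 := by
  have := congrArg (T.proj K)
    (RingQuot.mkAlgHom_rel K (PathAlgebraRel.sum (K := K) (s := T.src) (t := T.tgt)))
  rw [map_one] at this
  have h2 := map_finsum ((T.proj K).comp (PathAlgebra.proj K T.src T.tgt))
    (f := fun i : T.Edge => FreeAlgebra.ι K (Sum.inl i)) (Set.toFinite _)
  exact h2.symm.trans (this.trans (map_one _))

lemma proj_run_zero (a : T.Arrow) : T.proj K (T.run K a 0) = 1 := by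
  simp [run]

lemma proj_run_succ (a : T.Arrow) (m : ℕ) :
    T.proj K (T.run K a (m + 1)) = T.proj K (T.run K a m) * T.arr K ((T.next ^ m) a) := by
  simp [run, List.range_succ, arr]

lemma next_pow_fst (a : T.Arrow) (m : ℕ) : ((T.next ^ m) a).fst = a.fst := by
  induction m with
  | zero => rfl
  | succ m ih => rw [pow_succ', Equiv.Perm.mul_apply, T.next_fst, ih]

lemma proj_run_succ_mul_arr (a b : T.Arrow) (m : ℕ) (h : a.fst ≠ b.fst) :
    T.proj K (T.run K a (m + 1)) * T.arr K b = 0 := by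
  rw [proj_run_succ, mul_assoc, arr_mul_arr, mul_zero]
  rwa [next_pow_fst]

lemma proj_run_card [Finite V] (a : T.Arrow) :
    T.proj K (T.run K a (Nat.card {b : T.Arrow // b.fst = a.fst})) =
      T.proj K (T.run K a.symm (Nat.card {b : T.Arrow // b.fst = a.symm.fst})) :=
  RingQuot.mkAlgHom_rel K (Rel.cycle (T := T) (K := K) a)

/-- A finite set spanning the algebra: the idempotents and the nontrivial paths running at most
once around a cycle. -/
def spanningSet : Set (T.BrauerAlgebra K) :=
  Set.range (T.e K) ∪ {x | ∃ (a : T.Arrow) (m : ℕ),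
    m < Nat.card {b : T.Arrow // b.fst = a.fst} ∧ x = T.proj K (T.run K a (m + 1))}

instance [Finite V] : Finite T.Arrow :=
  Finite.of_injective _ (SimpleGraph.Dart.toProd_injective (G := T.graph))

lemma spanningSet_finite [Finite V] : (T.spanningSet K).Finite := by
  refine (Set.finite_range _).union ?_
  refine (Set.finite_range fun x : T.Arrow × Fin (Nat.card T.Arrow) =>
    T.proj K (T.run K x.1 (x.2 + 1))).subset ?_
  rintro x ⟨a, m, hm, rfl⟩
  exact ⟨(a, ⟨m, hm.trans_le (Finite.card_subtype_le _)⟩), rfl⟩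

lemma card_pos [Finite V] (a : T.Arrow) : 0 < Nat.card {b : T.Arrow // b.fst = a.fst} :=
  have : Nonempty {b : T.Arrow // b.fst = a.fst} := ⟨⟨a, rfl⟩⟩
  Nat.card_pos

lemma arr_mem [Finite V] (a : T.Arrow) : T.arr K a ∈ Submodule.span K (T.spanningSet K) := by
  refine Submodule.subset_span (Or.inr ⟨a, 0, T.card_pos a, ?_⟩)
  rw [proj_run_succ, proj_run_zero, one_mul]
  rfl

lemma mul_e_mem (x : T.BrauerAlgebra K) (hx : x ∈ Submodule.span K (T.spanningSet K))
    (j : T.Edge) : x * T.e K j ∈ Submodule.span K (T.spanningSet K) := by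
  induction hx using Submodule.span_induction with
  | zero => simp
  | add x y _ _ hx hy => rw [add_mul]; exact add_mem hx hy
  | smul c x _ hx => rw [smul_mul_assoc]; exact Submodule.smul_mem _ _ hx
  | mem x hx =>
    rcases hx with ⟨i, rfl⟩ | ⟨a, m, hm, rfl⟩
    · by_cases h : i = j
      · subst h
        rw [e_mul_e_self]
        exact Submodule.subset_span (Or.inl ⟨i, rfl⟩)
      · simp [e_mul_e _ _ _ _ h]
    · by_cases h : T.tgt ((T.next ^ m) a) = j
      · subst h
        rw [proj_run_succ, mul_assoc, arr_mul_e, ← proj_run_succ]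
        exact Submodule.subset_span (Or.inr ⟨a, m, hm, rfl⟩)
      · rw [proj_run_succ, ← arr_mul_e, mul_assoc, mul_assoc, e_mul_e _ _ _ _ h]
        simp

lemma mul_arr_mem [Finite V] (x : T.BrauerAlgebra K)
    (hx : x ∈ Submodule.span K (T.spanningSet K)) (b : T.Arrow) :
    x * T.arr K b ∈ Submodule.span K (T.spanningSet K) := by
  induction hx using Submodule.span_induction with
  | zero => simp
  | add x y _ _ hx hy => rw [add_mul]; exact add_mem hx hy
  | smul c x _ hx => rw [smul_mul_assoc]; exact Submodule.smul_mem _ _ hx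
  | mem x hx =>
    rcases hx with ⟨i, rfl⟩ | ⟨a, m, hm, rfl⟩
    · by_cases h : i = T.src b
      · subst h
        rw [e_mul_arr]
        exact T.arr_mem K b
      · rw [← e_mul_arr, ← mul_assoc, e_mul_e _ _ _ _ h]
        simp
    · by_cases hf : a.fst = b.fst
      · by_cases hlt : m + 1 < Nat.card {b : T.Arrow // b.fst = a.fst}
        · by_cases h : b = (T.next ^ (m + 1)) a
          · subst h
            rw [← proj_run_succ]
            exact Submodule.subset_span (Or.inr ⟨a, m + 1, hlt, rfl⟩)
          · have hne : T.tgt ((T.next ^ m) a) ≠ T.src b := by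
              intro he
              apply h
              have h1 : (T.next ((T.next ^ m) a)).edge = b.edge := congrArg Subtype.val he
              rcases (SimpleGraph.dart_edge_eq_iff _ _).1 h1 with h2 | h2
              · rw [← h2, pow_succ', Equiv.Perm.mul_apply]
              · have h3 := congrArg (fun d : T.graph.Dart => d.fst) h2
                have h4 := b.adj.ne
                simp only [T.next_fst, T.next_pow_fst] at h3
                exact absurd (hf.symm.trans h3) h4
            rw [proj_run_succ, ← arr_mul_e, ← T.e_mul_arr K b, mul_assoc, mul_assoc,
              ← mul_assoc (T.e K _) (T.e K _), e_mul_e _ _ _ _ hne]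
            simp
        · have hm' : m + 1 = Nat.card {b : T.Arrow // b.fst = a.fst} := by omega
          obtain ⟨k, hk⟩ := Nat.exists_eq_succ_of_ne_zero (T.card_pos a.symm).ne'
          rw [hm', proj_run_card, hk, Nat.succ_eq_add_one, proj_run_succ_mul_arr]
          · exact zero_mem _
          · intro h
            exact a.adj.ne (hf.trans h.symm)
      · rw [proj_run_succ_mul_arr _ _ _ _ _ hf]
        exact zero_mem _

lemma span_spanningSet [Finite V] : Submodule.span K (T.spanningSet K) = ⊤ := by
  rw [eq_top_iff]
  rintro y -
  obtain ⟨z, rfl⟩ := RingQuot.mkAlgHom_surjective K (T.Rel K) y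
  obtain ⟨f, rfl⟩ := RingQuot.mkAlgHom_surjective K (PathAlgebraRel K T.src T.tgt) z
  have key : ∀ x ∈ Submodule.span K (T.spanningSet K),
      x * T.proj K (PathAlgebra.proj K T.src T.tgt f) ∈ Submodule.span K (T.spanningSet K) := by
    induction f using FreeAlgebra.induction with
    | grade0 r =>
      intro x hx
      rw [AlgHom.commutes, AlgHom.commutes, ← Algebra.commutes, ← Algebra.smul_def]
      exact Submodule.smul_mem _ _ hx
    | grade1 g =>
      intro x hx
      rcases g with i | a
      · exact T.mul_e_mem K x hx i
      · exact T.mul_arr_mem K x hx a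
    | mul f g hf hg =>
      intro x hx
      rw [map_mul, map_mul, ← mul_assoc]
      exact hg _ (hf _ hx)
    | add f g hf hg =>
      intro x hx
      rw [map_add, map_add, mul_add]
      exact add_mem (hf _ hx) (hg _ hx)
  have h1 : (1 : T.BrauerAlgebra K) ∈ Submodule.span K (T.spanningSet K) := by
    rw [← finsum_e]
    exact finsum_induction (· ∈ Submodule.span K (T.spanningSet K)) (zero_mem _)
      (fun _ _ => add_mem) fun i => Submodule.subset_span (Or.inl ⟨i, rfl⟩)
  have := key 1 h1
  rwa [one_mul] at this

instance [Finite V] : Module.Finite K (T.BrauerAlgebra K) :=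
  ⟨⟨(T.spanningSet_finite K).toFinset, by simpa using T.span_spanningSet K⟩⟩

instance [Finite V] : IsNoetherianRing (T.BrauerAlgebra K) :=
  isNoetherian_of_tower K inferInstance

/-! ### The bounded derived category and stalk complexes -/

/-- The indecomposable projective left module `A e_i`. -/
noncomputable def projModule [Finite V] (i : T.Edge) :
    FGModuleCat.{max u v} (T.BrauerAlgebra K) :=
  FGModuleCat.of (T.BrauerAlgebra K) (Ideal.span {T.e K i} : Ideal (T.BrauerAlgebra K))

/-- The bounded derived category of finitely generated left modules. -/
abbrev Db [Finite V] [HasDerivedCategory.{w} (FGModuleCat.{max u v} (T.BrauerAlgebra K))] :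
    Type _ :=
  DerivedCategory.Bounded (FGModuleCat.{max u v} (T.BrauerAlgebra K))

/-- The module `M`, viewed as a complex concentrated in (cohomological) degree `p`. -/
noncomputable def stalk [Finite V]
    [HasDerivedCategory.{w} (FGModuleCat.{max u v} (T.BrauerAlgebra K))]
    (M : FGModuleCat.{max u v} (T.BrauerAlgebra K)) (p : ℤ) : T.Db K :=
  ⟨(DerivedCategory.singleFunctor _ p).obj M,
    ⟨p, inferInstanceAs (((DerivedCategory.singleFunctor _ p).obj M).IsGE p)⟩,
    ⟨p, inferInstanceAs (((DerivedCategory.singleFunctor _ p).obj M).IsLE p)⟩⟩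

/-- `X` is, up to isomorphism, the stalk complex of the indecomposable projective module
corresponding to the vertex `i`, concentrated in degree `p`. -/
def IsProjStalk [Finite V] [HasDerivedCategory.{w} (FGModuleCat.{max u v} (T.BrauerAlgebra K))]
    (X : T.Db K) (i : T.Edge) (p : ℤ) : Prop :=
  Nonempty (X ≅ T.stalk K (T.projModule K i) p)

end BrauerTree

/-!
`Hom(Ae_i[-p], Ae_j[-q][-1])` vanishes unless `p = q + 1`: for `p ≤ q` by the t-structure, for
`p > q + 1` because `Ae_i` is projective. For `p = q + 1` it is `Hom_A(Ae_i, Ae_j) ≅ e_i A e_j`.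
This is nonzero if and only if the edges `i` and `j` have a common end `x`: the paths of `Q` which
do not vanish in `A` run around the cycle of a single vertex of the tree, and conversely the path
from `i` to `j` around `x` acts nontrivially in the left regular representation, which is
constructed by hand on a set of labels for the nonzero paths. Finally, the maximal sequences of
nonrepeating arrows whose neighbors have nonzero products are the full cycles around the vertices of
the tree, so `i` and `j` lie on the same `A`-cycle if and only if they have a common end.
-/

/-! ### Partial maps as linear operators -/

section PartialMap

variable (K : Type*) [Semiring K] {S : Type*}

/-- The linear endomorphism of the free module on `S` induced by a partial map from `S` to itself:
a basis vector goes to the basis vector of its image, or to zero where the map is undefined. -/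
noncomputable def partialMapEnd (f : S → Option S) : Module.End K (S →₀ K) :=
  Finsupp.lift _ K S fun s => (f s).elim 0 (Finsupp.single · 1)

variable {K}

lemma partialMapEnd_single (f : S → Option S) (s : S) :
    partialMapEnd K f (Finsupp.single s 1) = (f s).elim 0 (Finsupp.single · 1) := by
  simp [partialMapEnd]

lemma finsupp_end_ext {f g : Module.End K (S →₀ K)}
    (h : ∀ s, f (Finsupp.single s 1) = g (Finsupp.single s 1)) : f = g :=
  Finsupp.lhom_ext' fun s => LinearMap.ext_ring (h s)

lemma partialMapEnd_mul (f g : S → Option S) :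
    partialMapEnd K f * partialMapEnd K g = partialMapEnd K fun s => (g s).bind f := by
  refine finsupp_end_ext fun s => ?_
  rw [Module.End.mul_apply, partialMapEnd_single, partialMapEnd_single]
  cases g s with
  | none => exact map_zero _
  | some t => exact partialMapEnd_single f t

lemma partialMapEnd_none : partialMapEnd K (fun _ : S => none) = 0 :=
  finsupp_end_ext fun s => partialMapEnd_single _ s

lemma partialMapEnd_ne_zero [Nontrivial K] {f : S → Option S} {s : S} (h : f s ≠ none) :
    partialMapEnd K f ≠ 0 := by
  obtain ⟨t, ht⟩ := Option.ne_none_iff_exists'.1 h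
  intro h0
  have h1 := partialMapEnd_single (K := K) f s
  rw [h0, ht] at h1
  exact one_ne_zero (Finsupp.single_eq_zero.1 h1.symm)

lemma finsum_partialMapEnd_fiber {ι : Type*} [Finite ι] [DecidableEq ι] (c : S → ι) :
    ∑ᶠ i, partialMapEnd K (fun s => if c s = i then some s else none) = 1 := by
  have := Fintype.ofFinite ι
  rw [finsum_eq_sum_of_fintype]
  refine finsupp_end_ext fun s => ?_
  rw [LinearMap.sum_apply, Finset.sum_eq_single (c s)]
  · simp [partialMapEnd_single]
  · intro i _ hi
    simp [partialMapEnd_single, hi.symm]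
  · simp

end PartialMap

/-! ### Left ideals generated by idempotents -/

section Idempotent

variable {R : Type*} [Semiring R] {e : R}

lemma mul_eq_self_of_mem_span_singleton (he : IsIdempotentElem e) {x : R}
    (hx : x ∈ Ideal.span {e}) : x * e = x := by
  obtain ⟨y, rfl⟩ := Ideal.mem_span_singleton'.1 hx
  rw [mul_assoc, he.eq]

lemma subsingleton_linearMap_span_singleton_iff (he : IsIdempotentElem e) (M : Type*)
    [AddCommMonoid M] [Module R M] :
    Subsingleton (Ideal.span {e} →ₗ[R] M) ↔ ∀ m : M, e • m = 0 := by
  let u : Ideal.span {e} := ⟨e, Ideal.mem_span_singleton_self e⟩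
  constructor
  · intro h m
    exact LinearMap.congr_fun (Subsingleton.elim
      ((LinearMap.toSpanSingleton R M m).comp (Ideal.span {e}).subtype) 0) u
  · intro h
    refine subsingleton_of_forall_eq 0 fun f => LinearMap.ext fun y => ?_
    have hu : e • u = u := Subtype.ext he
    have hy : y.1 • u = y := Subtype.ext (mul_eq_self_of_mem_span_singleton he y.2)
    rw [← hy, map_smul, ← hu, map_smul, h, smul_zero, LinearMap.zero_apply]

lemma subsingleton_linearMap_span_span_iff {f : R} (he : IsIdempotentElem e)
    (hf : IsIdempotentElem f) :
    Subsingleton (Ideal.span {e} →ₗ[R] Ideal.span {f}) ↔ ∀ x : R, e * x * f = 0 := by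
  rw [subsingleton_linearMap_span_singleton_iff he]
  constructor
  · intro h x
    rw [mul_assoc]
    exact congrArg Subtype.val (h ⟨x * f, Ideal.mul_mem_left _ _ (Ideal.mem_span_singleton_self f)⟩)
  · intro h y
    refine Subtype.ext ?_
    change e * y.1 = 0
    rw [← mul_eq_self_of_mem_span_singleton hf y.2, ← mul_assoc]
    exact h _

lemma projective_span_singleton (he : IsIdempotentElem e) : Module.Projective R (Ideal.span {e}) :=
  Module.Projective.of_split (Ideal.span {e}).subtype
    ((LinearMap.toSpanSingleton R R e).codRestrict (Ideal.span {e}) fun _ =>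
      Ideal.mul_mem_left _ _ (Ideal.mem_span_singleton_self e))
    (LinearMap.ext fun y => Subtype.ext (mul_eq_self_of_mem_span_singleton he y.2))

end Idempotent

section FGModuleCat

variable {R : Type u} [Ring R]

lemma projective_fgModuleCat_of [IsNoetherianRing R] (M : Type v) [AddCommGroup M] [Module R M]
    [Module.Finite R M] [Module.Projective R M] [Small.{v} R] : Projective (FGModuleCat.of R M) :=
  (forget₂ (FGModuleCat.{v} R) (ModuleCat.{v} R)).projective_of_map_projective
    ((IsProjective.iff_projective M).1 inferInstance)

/-- Morphisms of finitely generated modules are linear maps. -/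
noncomputable def fgModuleCatHomEquiv (M N : FGModuleCat.{v} R) : (M ⟶ N) ≃ (M →ₗ[R] N) :=
  (ModuleCat.isFG R).fullyFaithfulι.homEquiv.trans ModuleCat.homEquiv

end FGModuleCat

section DerivedCategory

open DerivedCategory

variable {C : Type u} [Category.{v} C] [Abelian C] [HasDerivedCategory.{w} C]

lemma subsingleton_singleFunctor_hom_iff (P Y : C) [Projective P] (m n : ℤ) :
    Subsingleton ((singleFunctor C m).obj P ⟶ (singleFunctor C n).obj Y) ↔
      (m = n → Subsingleton (P ⟶ Y)) := by
  rcases lt_trichotomy m n with hmn | rfl | hmn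
  · simp only [hmn.ne, false_imp_iff, iff_true]
    exact subsingleton_of_forall_eq 0 fun f => TStructure.t.zero_of_isLE_of_isGE f m n hmn
      (inferInstanceAs (((singleFunctor C m).obj P).IsLE m))
      (inferInstanceAs (((singleFunctor C n).obj Y).IsGE n))
  · rw [forall_prop_of_true rfl]
    exact (Functor.FullyFaithful.ofFullyFaithful
      (singleFunctor C m)).homEquiv.subsingleton_congr.symm
  · simp only [hmn.ne', false_imp_iff, iff_true]
    exact subsingleton_of_forall_eq 0 fun f =>
      from_singleFunctor_obj_eq_zero_of_projective
        (L := (CochainComplex.singleFunctor C n).obj Y) f n hmn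

end DerivedCategory

namespace PathAlgebra

variable {K : Type*} [Field K] {I E : Type*} {s t : E → I} {B : Type*} [Ring B] [Algebra K B]

/-- The relations of the path algebra of a quiver, for elements `ε i` (trivial paths) and `α a`
(arrows) of an arbitrary ring. -/
structure IsRepresentation (s t : E → I) (ε : I → B) (α : E → B) : Prop where
  idem (i : I) : ε i * ε i = ε i
  orth (i j : I) (h : i ≠ j) : ε i * ε j = 0
  sum : ∑ᶠ i, ε i = 1
  source (a : E) : ε (s a) * α a = α a
  target (a : E) : α a * ε (t a) = α a

lemma IsRepresentation.lift_eq_of_rel [Finite I] {ε : I → B} {α : E → B}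
    (h : IsRepresentation s t ε α) ⦃x y : FreeAlgebra K (I ⊕ E)⦄ (hxy : PathAlgebraRel K s t x y) :
    FreeAlgebra.lift K (Sum.elim ε α) x = FreeAlgebra.lift K (Sum.elim ε α) y := by
  have hsum : FreeAlgebra.lift K (Sum.elim ε α) (∑ᶠ i, FreeAlgebra.ι K (Sum.inl i)) = 1 := by
    rw [map_finsum _ (Set.toFinite _)]
    simpa only [FreeAlgebra.lift_ι_apply, Sum.elim_inl] using h.sum
  induction hxy with
  | idem i => simp [h.idem]
  | orth i j hij => simp [h.orth i j hij]
  | sum => rw [hsum, map_one]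
  | source a => simp [h.source]
  | target a => simp [h.target]

variable (K) in
/-- The algebra homomorphism from the path algebra given by a representation. -/
noncomputable def lift [Finite I] {ε : I → B} {α : E → B} (h : IsRepresentation s t ε α) :
    PathAlgebra K s t →ₐ[K] B :=
  RingQuot.liftAlgHom K ⟨FreeAlgebra.lift K (Sum.elim ε α), h.lift_eq_of_rel⟩

lemma lift_arrow [Finite I] {ε : I → B} {α : E → B} (h : IsRepresentation s t ε α) (a : E) :
    lift K h (arrow K s t a) = α a :=
  (RingQuot.liftAlgHom_mkAlgHom_apply K _ h.lift_eq_of_rel _).trans (by simp)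

end PathAlgebra

namespace BrauerTree

variable {V : Type v} (T : BrauerTree V)

/-- The number of edges of the tree at a vertex. -/
noncomputable def valency (x : V) : ℕ := Nat.card {b : T.Arrow // b.fst = x}

lemma mem_edge_iff_exists_arrow {x : V} {i : T.Edge} :
    x ∈ (i : Sym2 V) ↔ ∃ a : T.Arrow, a.fst = x ∧ T.src a = i := by
  constructor
  · intro hx
    obtain ⟨y, hy⟩ := Sym2.mem_iff_exists.1 hx
    exact ⟨⟨(x, y), (hy ▸ i.2 : s(x, y) ∈ T.graph.edgeSet)⟩, rfl, Subtype.ext hy.symm⟩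
  · rintro ⟨a, rfl, rfl⟩
    exact Sym2.mem_mk_left _ _

lemma exists_src_eq (i : T.Edge) : ∃ a : T.Arrow, T.src a = i :=
  let ⟨a, _, ha⟩ := T.mem_edge_iff_exists_arrow.1 (Sym2.out_fst_mem i.1)
  ⟨a, ha⟩

lemma src_symm (a : T.Arrow) : T.src a.symm = T.src a :=
  Subtype.ext a.edge_symm

lemma tgt_next_pow (a : T.Arrow) (m : ℕ) :
    T.tgt ((T.next ^ m) a) = T.src ((T.next ^ (m + 1)) a) := by
  rw [pow_succ', Equiv.Perm.mul_apply]
  rfl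

lemma isCycleOn_next (x : V) : T.next.IsCycleOn {b : T.Arrow | b.fst = x} := by
  refine ⟨Equiv.bijOn _ fun b => ?_, fun b hb c hc => T.sameCycle b c (hb.trans hc.symm)⟩
  simp only [Set.mem_ofPred_eq, T.next_fst]

section Finite

variable [Finite V]

lemma valency_pos (a : T.Arrow) : 0 < T.valency a.fst := T.card_pos a

/-- The arrows of the cycle around a vertex of the tree. -/
noncomputable def arrowsAt (x : V) : Finset T.Arrow := (Set.toFinite {b | b.fst = x}).toFinset

lemma mem_arrowsAt {x : V} {b : T.Arrow} : b ∈ T.arrowsAt x ↔ b.fst = x :=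
  Set.Finite.mem_toFinset _

lemma card_arrowsAt (x : V) : (T.arrowsAt x).card = T.valency x :=
  (Set.ncard_eq_toFinset_card _ _).symm

lemma isCycleOn_arrowsAt (x : V) : T.next.IsCycleOn (T.arrowsAt x : Set T.Arrow) := by
  rw [arrowsAt, Set.Finite.coe_toFinset]
  exact T.isCycleOn_next x

lemma next_pow_apply_eq_iff (a : T.Arrow) {m n : ℕ} (hm : m < T.valency a.fst)
    (hn : n < T.valency a.fst) : (T.next ^ m) a = (T.next ^ n) a ↔ m = n := by
  rw [(T.isCycleOn_arrowsAt a.fst).pow_apply_eq_pow_apply (T.mem_arrowsAt.2 rfl), card_arrowsAt]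
  exact ⟨fun h => h.eq_of_lt_of_lt hm hn, fun h => h ▸ rfl⟩

lemma next_pow_valency (a : T.Arrow) : (T.next ^ T.valency a.fst) a = a := by
  rw [← card_arrowsAt, (T.isCycleOn_arrowsAt a.fst).pow_card_apply (T.mem_arrowsAt.2 rfl)]

lemma exists_next_pow_eq {a b : T.Arrow} (h : a.fst = b.fst) :
    ∃ m < T.valency a.fst, (T.next ^ m) a = b := by
  rw [← card_arrowsAt]
  exact (T.isCycleOn_arrowsAt a.fst).exists_pow_eq (T.mem_arrowsAt.2 rfl) (T.mem_arrowsAt.2 h.symm)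

end Finite

/-! ### The left regular representation -/

/-- The nonzero classes of paths in the algebra, which label the basis of the left regular
representation: the trivial paths, the paths of length `m + 1 < T.valency a.fst` starting with an
arrow `a`, and the full cycles at an edge `i`, which coincide for the two ends of `i`. The labels
`path a m` with larger `m` are spurious. -/
inductive PathClass : Type v
  | triv (i : T.Edge)
  | path (a : T.Arrow) (m : ℕ)
  | full (i : T.Edge)

namespace PathClass

variable {T}

/-- The edge at which a path starts. -/
def start : T.PathClass → T.Edge
  | triv i => i
  | path a _ => T.src a
  | full i => i

open Classical in
/-- The class of the path of length `m + 1` starting with `a`; `none` if that path is zero. -/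
noncomputable def ofRun (a : T.Arrow) (m : ℕ) : Option T.PathClass :=
  if m + 1 < T.valency a.fst then some (path a m)
  else if m + 1 = T.valency a.fst then some (full (T.src a)) else none

open Classical in
/-- The class of a path with the path of length `m + 1` starting with `a` prepended to it; `none`
if the product is zero. -/
noncomputable def prependRun (a : T.Arrow) (m : ℕ) : T.PathClass → Option T.PathClass
  | triv i => if T.src ((T.next ^ (m + 1)) a) = i then ofRun a m else none
  | path c k => if (T.next ^ (m + 1)) a = c then ofRun a (m + k + 1) else none
  | full _ => none

open Classical in
/-- The class of a path with the trivial path at `i` prepended to it. -/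
noncomputable def prependTriv (i : T.Edge) (p : T.PathClass) : Option T.PathClass :=
  if p.start = i then some p else none

lemma ofRun_eq_none {a : T.Arrow} {m : ℕ} (h : T.valency a.fst ≤ m) : ofRun a m = none := by
  rw [ofRun, if_neg (by omega), if_neg (by omega)]

lemma ofRun_ne_none {a : T.Arrow} {m : ℕ} (h : m < T.valency a.fst) : ofRun a m ≠ none := by
  unfold ofRun
  split_ifs
  · exact Option.some_ne_none _
  · exact Option.some_ne_none _
  · omega

lemma start_of_ofRun_eq_some {a : T.Arrow} {m : ℕ} {p : T.PathClass} (h : ofRun a m = some p) :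
    p.start = T.src a := by
  unfold ofRun at h
  split_ifs at h <;> cases h <;> rfl

lemma start_of_prependRun_eq_some {a : T.Arrow} {m : ℕ} {p q : T.PathClass}
    (h : prependRun a m p = some q) : q.start = T.src a := by
  cases p <;> simp only [prependRun, reduceCtorEq, Option.ite_none_right_eq_some] at h <;>
    exact start_of_ofRun_eq_some h.2

lemma prependRun_eq_none_of_start_ne {a : T.Arrow} {m : ℕ} {p : T.PathClass}
    (h : p.start ≠ T.src ((T.next ^ (m + 1)) a)) : prependRun a m p = none := by
  cases p with
  | triv i => exact if_neg (Ne.symm h)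
  | path c k => exact if_neg fun hc => h (congrArg T.src hc.symm)
  | full i => rfl

open Classical in
lemma ofRun_bind_prependRun (a c : T.Arrow) (m k : ℕ) :
    (ofRun c k).bind (prependRun a m) =
      if (T.next ^ (m + 1)) a = c then ofRun a (m + k + 1) else none := by
  have hnone (h : T.valency c.fst ≤ k + 1) :
      (if (T.next ^ (m + 1)) a = c then ofRun a (m + k + 1) else none) = none := by
    refine ite_eq_right_iff.2 fun hc => ofRun_eq_none ?_
    rw [← hc, T.next_pow_fst] at h
    omega
  rcases lt_trichotomy (k + 1) (T.valency c.fst) with hlt | heq | hgt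
  · rw [show ofRun c k = some (path c k) from if_pos hlt]
    rfl
  · rw [hnone heq.ge, show ofRun c k = some (full (T.src c)) by
      rw [ofRun, if_neg heq.not_lt, if_pos heq]]
    rfl
  · rw [hnone hgt.le, ofRun_eq_none (by omega)]
    rfl

lemma prependRun_bind_prependRun (a : T.Arrow) (m : ℕ) (p : T.PathClass) :
    (prependRun (T.next a) m p).bind (prependRun a 0) = prependRun a (m + 1) p := by
  have hofRun (k : ℕ) : (ofRun (T.next a) k).bind (prependRun a 0) = ofRun a (k + 1) := by
    rw [ofRun_bind_prependRun, if_pos (by simp), zero_add]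
  have hnext : (T.next ^ (m + 1)) (T.next a) = (T.next ^ (m + 1 + 1)) a := rfl
  cases p with
  | triv i =>
    rw [prependRun, prependRun, hnext]
    split_ifs
    · exact hofRun m
    · rfl
  | path c k =>
    rw [prependRun, prependRun, hnext]
    split_ifs
    · rw [hofRun, Nat.add_right_comm m 1 k]
    · rfl
  | full i => rfl

lemma prependRun_bind_prependRun_of_fst_ne {a b : T.Arrow} (h : a.fst ≠ b.fst)
    (p : T.PathClass) : (prependRun b 0 p).bind (prependRun a 0) = none := by
  have hofRun (k : ℕ) : (ofRun b k).bind (prependRun a 0) = none := by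
    rw [ofRun_bind_prependRun, if_neg]
    rintro rfl
    exact h (T.next_pow_fst a _).symm
  cases p with
  | triv i => simp only [prependRun]; split_ifs <;> simp [hofRun]
  | path c k => simp only [prependRun]; split_ifs <;> simp [hofRun]
  | full i => rfl

open Classical in
lemma prependRun_of_succ_eq_valency [Finite V] {a : T.Arrow} {m : ℕ}
    (hm : m + 1 = T.valency a.fst) (p : T.PathClass) :
    prependRun a m p = if p = triv (T.src a) then some (full (T.src a)) else none := by
  have hnext : (T.next ^ (m + 1)) a = a := hm ▸ T.next_pow_valency a
  cases p with
  | triv i =>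
    rw [prependRun, hnext, ofRun, if_neg hm.not_lt, if_pos hm]
    simp only [triv.injEq, eq_comm]
  | path c k =>
    rw [if_neg (by simp)]
    exact ite_eq_right_iff.2 fun _ => ofRun_eq_none (by omega)
  | full i => simp [prependRun]

end PathClass

section Representation

open PathClass

variable (K : Type u) [Field K]

lemma run_succ' (a : T.Arrow) (m : ℕ) : T.run K a (m + 1) =
    PathAlgebra.arrow K T.src T.tgt a * T.run K (T.next a) m := by
  simp only [run, List.range_succ_eq_map, List.map_cons, List.map_map, List.prod_cons]
  rfl

lemma run_one (a : T.Arrow) : T.run K a 1 = PathAlgebra.arrow K T.src T.tgt a := by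
  simp [run]

variable [Finite V]

lemma isRepresentation_prepend : PathAlgebra.IsRepresentation T.src T.tgt
    (fun i => partialMapEnd K (prependTriv i)) (fun a => partialMapEnd K (prependRun a 0)) where
  idem i := by
    rw [partialMapEnd_mul]
    refine congrArg _ (funext fun p => ?_)
    by_cases h : p.start = i <;> simp [prependTriv, h]
  orth i j hij := by
    rw [partialMapEnd_mul, ← partialMapEnd_none]
    refine congrArg _ (funext fun p => ?_)
    by_cases h : p.start = j <;> simp [prependTriv, h, hij.symm]
  sum := by
    classical
    unfold prependTriv
    exact finsum_partialMapEnd_fiber start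
  source a := by
    rw [partialMapEnd_mul]
    refine congrArg _ (funext fun p => ?_)
    cases h : prependRun a 0 p with
    | none => rfl
    | some q => exact if_pos (start_of_prependRun_eq_some h)
  target a := by
    rw [partialMapEnd_mul]
    refine congrArg _ (funext fun p => ?_)
    by_cases h : p.start = T.tgt a
    · simp [prependTriv, h]
    · rw [prependRun_eq_none_of_start_ne h]
      simp [prependTriv, h]

/-- The left regular representation of the path algebra on the path classes. -/
noncomputable def pathAct : PathAlgebra K T.src T.tgt →ₐ[K] Module.End K (T.PathClass →₀ K) :=
  PathAlgebra.lift K (T.isRepresentation_prepend K)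

lemma pathAct_arrow (a : T.Arrow) : T.pathAct K (PathAlgebra.arrow K T.src T.tgt a) =
    partialMapEnd K (prependRun a 0) :=
  PathAlgebra.lift_arrow (T.isRepresentation_prepend K) a

lemma pathAct_run_succ (a : T.Arrow) (m : ℕ) :
    T.pathAct K (T.run K a (m + 1)) = partialMapEnd K (prependRun a m) := by
  induction m generalizing a with
  | zero => rw [zero_add, run_one, pathAct_arrow]
  | succ m ih =>
    rw [run_succ', map_mul, ih, pathAct_arrow, partialMapEnd_mul]
    exact congrArg _ (funext (prependRun_bind_prependRun a m))

open Classical in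
lemma pathAct_run_valency (a : T.Arrow) : T.pathAct K (T.run K a (T.valency a.fst)) =
    partialMapEnd K fun p => if p = triv (T.src a) then some (full (T.src a)) else none := by
  obtain ⟨m, hm⟩ := Nat.exists_eq_add_one.2 (T.valency_pos a)
  rw [hm, pathAct_run_succ]
  exact congrArg _ (funext (prependRun_of_succ_eq_valency hm.symm))

lemma pathAct_eq_of_rel ⦃x y : PathAlgebra K T.src T.tgt⦄ (h : T.Rel K x y) :
    T.pathAct K x = T.pathAct K y := by
  induction h with
  | zero a b hab =>
    rw [map_mul, map_zero, pathAct_arrow, pathAct_arrow, partialMapEnd_mul, ← partialMapEnd_none]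
    exact congrArg _ (funext (prependRun_bind_prependRun_of_fst_ne hab))
  | cycle a =>
    refine (T.pathAct_run_valency K a).trans (Eq.trans ?_ (T.pathAct_run_valency K a.symm).symm)
    rw [src_symm]

/-- The left regular representation of the Brauer tree algebra on the path classes. -/
noncomputable def act : T.BrauerAlgebra K →ₐ[K] Module.End K (T.PathClass →₀ K) :=
  RingQuot.liftAlgHom K ⟨T.pathAct K, T.pathAct_eq_of_rel K⟩

lemma act_proj (x : PathAlgebra K T.src T.tgt) : T.act K (T.proj K x) = T.pathAct K x :=
  RingQuot.liftAlgHom_mkAlgHom_apply K _ (T.pathAct_eq_of_rel K) x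

lemma proj_run_succ_ne_zero {a : T.Arrow} {m : ℕ} (h : m < T.valency a.fst) :
    T.proj K (T.run K a (m + 1)) ≠ 0 := by
  refine ne_of_apply_ne (T.act K) ?_
  rw [act_proj, pathAct_run_succ, map_zero]
  refine partialMapEnd_ne_zero (s := triv (T.src ((T.next ^ (m + 1)) a))) ?_
  rw [prependRun, if_pos rfl]
  exact ofRun_ne_none h

end Representation

section Idempotents

/-- The edges `i` and `j` of the tree have an end in common (possibly `i = j`). -/
def HaveCommonEnd (i j : T.Edge) : Prop := ∃ x, x ∈ (i : Sym2 V) ∧ x ∈ (j : Sym2 V)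

variable (K : Type u) [Field K]

lemma e_mul_proj_run_succ (a : T.Arrow) (m : ℕ) :
    T.e K (T.src a) * T.proj K (T.run K a (m + 1)) = T.proj K (T.run K a (m + 1)) := by
  rw [run_succ', map_mul, ← mul_assoc]
  exact congrArg (· * _) (T.e_mul_arr K a)

lemma proj_run_succ_mul_e (a : T.Arrow) (m : ℕ) :
    T.proj K (T.run K a (m + 1)) * T.e K (T.src ((T.next ^ (m + 1)) a)) =
      T.proj K (T.run K a (m + 1)) := by
  rw [proj_run_succ, mul_assoc, ← tgt_next_pow, arr_mul_e]

variable [Finite V]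

lemma e_ne_zero (i : T.Edge) : T.e K i ≠ 0 := by
  obtain ⟨a, rfl⟩ := T.exists_src_eq i
  refine left_ne_zero_of_mul (b := T.proj K (T.run K a (0 + 1))) ?_
  rw [e_mul_proj_run_succ]
  exact T.proj_run_succ_ne_zero K (T.valency_pos a)

lemma exists_e_mul_mul_e_ne_zero {i j : T.Edge} (h : T.HaveCommonEnd i j) :
    ∃ x : T.BrauerAlgebra K, T.e K i * x * T.e K j ≠ 0 := by
  obtain ⟨x, hi, hj⟩ := h
  obtain ⟨a, rfl, rfl⟩ := T.mem_edge_iff_exists_arrow.1 hi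
  obtain ⟨b, hab, rfl⟩ := T.mem_edge_iff_exists_arrow.1 hj
  obtain ⟨m, hm, rfl⟩ := T.exists_next_pow_eq hab.symm
  cases m with
  | zero =>
    refine ⟨1, ?_⟩
    rw [mul_one, pow_zero, Equiv.Perm.one_apply, e_mul_e_self]
    exact T.e_ne_zero K (T.src a)
  | succ m =>
    refine ⟨T.proj K (T.run K a (m + 1)), ?_⟩
    rw [e_mul_proj_run_succ, proj_run_succ_mul_e]
    exact T.proj_run_succ_ne_zero K (by omega)

lemma e_mul_mul_e_eq_zero {i j : T.Edge} (h : ¬ T.HaveCommonEnd i j) (x : T.BrauerAlgebra K) :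
    T.e K i * x * T.e K j = 0 := by
  suffices LinearMap.mulLeftRight K (T.e K i, T.e K j) = 0 from
    (LinearMap.mulLeftRight_apply ..).symm.trans (LinearMap.congr_fun this x)
  refine LinearMap.ext_on (T.span_spanningSet K) ?_
  rintro _ (⟨k, rfl⟩ | ⟨a, m, -, rfl⟩) <;> rw [LinearMap.mulLeftRight_apply, LinearMap.zero_apply]
  · by_cases hik : i = k
    · have hkj : k ≠ j := by
        rintro rfl
        exact h ⟨_, hik ▸ Sym2.out_fst_mem k.1, Sym2.out_fst_mem k.1⟩
      rw [mul_assoc, T.e_mul_e K k j hkj, mul_zero]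
    · rw [T.e_mul_e K i k hik, zero_mul]
  · by_cases hi : i = T.src a
    · have hj : T.src ((T.next ^ (m + 1)) a) ≠ j := by
        rintro rfl
        exact h ⟨a.fst, T.mem_edge_iff_exists_arrow.2 ⟨a, rfl, hi.symm⟩,
          T.mem_edge_iff_exists_arrow.2 ⟨_, T.next_pow_fst a _, rfl⟩⟩
      rw [← proj_run_succ_mul_e, mul_assoc, mul_assoc, T.e_mul_e K _ _ hj, mul_zero, mul_zero]
    · rw [← e_mul_proj_run_succ, ← mul_assoc, T.e_mul_e K _ _ hi, zero_mul, zero_mul]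

lemma forall_e_mul_mul_e_eq_zero_iff (i j : T.Edge) :
    (∀ x : T.BrauerAlgebra K, T.e K i * x * T.e K j = 0) ↔ ¬ T.HaveCommonEnd i j := by
  refine ⟨fun h hij => ?_, T.e_mul_mul_e_eq_zero K⟩
  obtain ⟨x, hx⟩ := T.exists_e_mul_mul_e_ne_zero K hij
  exact hx (h x)

end Idempotents

/-! ### Cycles and common ends -/

section ACycles

variable {K : Type u} [Field K]

variable {T} in
lemma IsArrowChain.fst_eq {L : List T.Arrow} (h : T.IsArrowChain K L) {a b : T.Arrow}
    (ha : a ∈ L) (hb : b ∈ L) : a.fst = b.fst := by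
  have hchain : L.IsChain fun a b => a.fst = b.fst :=
    h.2.imp fun a b hab => not_imp_comm.1 (T.arr_mul_arr K a b) hab
  have : IsTrans T.Arrow fun a b => a.fst = b.fst := ⟨fun _ _ _ => Eq.trans⟩
  have : Std.Symm fun a b : T.Arrow => a.fst = b.fst := ⟨fun _ _ => Eq.symm⟩
  exact hchain.pairwise.forall_of_forall (R := fun a b : T.Arrow => a.fst = b.fst)
    (fun _ _ => rfl) ha hb

lemma fst_mem_src (a : T.Arrow) : a.fst ∈ (T.src a : Sym2 V) :=
  T.mem_edge_iff_exists_arrow.2 ⟨a, rfl, rfl⟩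

variable {T} in
lemma IsArrowChain.fst_mem_of_memCycle {L : List T.Arrow} (h : T.IsArrowChain K L) {a : T.Arrow}
    (ha : a ∈ L) {i : T.Edge} (hi : T.MemCycle i L) : a.fst ∈ (i : Sym2 V) := by
  obtain ⟨b, hb, rfl | rfl⟩ := hi
  · rw [h.fst_eq ha hb]
    exact T.fst_mem_src b
  · rw [h.fst_eq ha hb, ← T.next_fst b]
    exact T.fst_mem_src (T.next b)

/-- The arrows of the cycle around the first vertex of `a`, in order and starting with `a`. -/
noncomputable def fullCycle (a : T.Arrow) : List T.Arrow :=
  (List.range (T.valency a.fst)).map fun k => (T.next ^ k) a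

variable [Finite V]

variable (K) in
lemma arr_mul_arr_next_ne_zero {a : T.Arrow} (h : 1 < T.valency a.fst) :
    T.arr K a * T.arr K (T.next a) ≠ 0 := by
  have := T.proj_run_succ_ne_zero K h
  rwa [run_succ', run_one, map_mul] at this

lemma mem_fullCycle {a b : T.Arrow} : b ∈ T.fullCycle a ↔ b.fst = a.fst := by
  simp only [fullCycle, List.mem_map, List.mem_range]
  constructor
  · rintro ⟨k, -, rfl⟩
    exact T.next_pow_fst a k
  · exact fun h => T.exists_next_pow_eq h.symm

variable (K)

lemma isArrowChain_fullCycle (a : T.Arrow) : T.IsArrowChain K (T.fullCycle a) := by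
  constructor
  · refine List.Nodup.map_on (fun m hm n hn h => ?_) List.nodup_range
    exact (T.next_pow_apply_eq_iff a (List.mem_range.1 hm) (List.mem_range.1 hn)).1 h
  · rw [List.isChain_iff_getElem]
    intro k hk
    simp only [fullCycle, List.length_map, List.length_range] at hk
    simp only [fullCycle, List.getElem_map, List.getElem_range]
    rw [pow_succ', Equiv.Perm.mul_apply]
    refine T.arr_mul_arr_next_ne_zero K ?_
    rw [T.next_pow_fst a k]
    omega

lemma isACycle_fullCycle (a : T.Arrow) : T.IsACycle K (T.fullCycle a) := by
  refine ⟨T.isArrowChain_fullCycle K a, fun L hL hs => (hs.eq_of_length_le ?_).symm⟩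
  have ha : a ∈ L := hs.subset (T.mem_fullCycle.2 rfl)
  exact (hL.1.subperm fun b hb => T.mem_fullCycle.2 (hL.fst_eq hb ha)).length_le

lemma onCommonACycle_iff_haveCommonEnd (i j : T.Edge) :
    T.OnCommonACycle K i j ↔ T.HaveCommonEnd i j := by
  constructor
  · rintro ⟨L, hL, hi, hj⟩
    have ⟨a, ha, _⟩ := hi
    exact ⟨a.fst, hL.1.fst_mem_of_memCycle ha hi, hL.1.fst_mem_of_memCycle ha hj⟩
  · rintro ⟨x, hi, hj⟩
    obtain ⟨a, rfl, rfl⟩ := T.mem_edge_iff_exists_arrow.1 hi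
    obtain ⟨b, hab, rfl⟩ := T.mem_edge_iff_exists_arrow.1 hj
    exact ⟨T.fullCycle a, T.isACycle_fullCycle K a, ⟨a, T.mem_fullCycle.2 rfl, Or.inl rfl⟩,
      ⟨b, T.mem_fullCycle.2 hab, Or.inl rfl⟩⟩

end ACycles

/-! ### Morphisms between stalk complexes -/

section StalkComplexes

open DerivedCategory

variable (K : Type u) [Field K]

lemma onCommonACycle_comm (i j : T.Edge) : T.OnCommonACycle K i j ↔ T.OnCommonACycle K j i :=
  exists_congr fun _ => and_congr_right fun _ => and_comm

variable [Finite V]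

instance projective_projModule (i : T.Edge) : Projective (T.projModule K i) :=
  have := projective_span_singleton (T.e_mul_e_self K i)
  projective_fgModuleCat_of _

lemma subsingleton_projModule_hom_iff (i j : T.Edge) :
    Subsingleton (T.projModule K i ⟶ T.projModule K j) ↔ ¬ T.OnCommonACycle K i j := by
  rw [onCommonACycle_iff_haveCommonEnd, ← T.forall_e_mul_mul_e_eq_zero_iff K,
    ← subsingleton_linearMap_span_span_iff (T.e_mul_e_self K i) (T.e_mul_e_self K j)]
  exact (fgModuleCatHomEquiv _ _).subsingleton_congr

variable [HasDerivedCategory.{w} (FGModuleCat.{max u v} (T.BrauerAlgebra K))]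
  {M N : FGModuleCat.{max u v} (T.BrauerAlgebra K)} {p q : ℤ} {X Y : T.Db K} {i j : T.Edge}

lemma subsingleton_hom_shift_iff [Projective M] (α : X ≅ T.stalk K M p) (β : Y ≅ T.stalk K N q) :
    Subsingleton (X ⟶ Y⟦(-1 : ℤ)⟧) ↔ (p = q + 1 → Subsingleton (M ⟶ N)) := by
  let γ : Bounded.ι.obj (Y⟦(-1 : ℤ)⟧) ≅ (singleFunctor _ (q + 1)).obj N :=
    (Bounded.ι.commShiftIso (-1 : ℤ)).app Y ≪≫ (shiftFunctor _ (-1 : ℤ)).mapIso (Bounded.ι.mapIso β)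
      ≪≫ ((singleFunctors _).shiftIso (-1) (q + 1) q (by ring)).app N
  rw [← subsingleton_singleFunctor_hom_iff]
  exact ((Functor.FullyFaithful.ofFullyFaithful Bounded.ι).homEquiv.trans
    ((Bounded.ι.mapIso α).homCongr γ)).subsingleton_congr

variable {T K} in
lemma IsProjStalk.subsingleton_hom_shift_iff (hX : T.IsProjStalk K X i p)
    (hY : T.IsProjStalk K Y j q) :
    Subsingleton (X ⟶ Y⟦(-1 : ℤ)⟧) ↔ (p = q + 1 → ¬ T.OnCommonACycle K i j) := by
  obtain ⟨α⟩ := hX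
  obtain ⟨β⟩ := hY
  rw [T.subsingleton_hom_shift_iff K α β, subsingleton_projModule_hom_iff]

end StalkComplexes

end BrauerTree

theorem hom_between_stalks_vanishes_iff_general {K : Type u} [Field K] {V : Type v} [Finite V]
    (T : BrauerTree V) [HasDerivedCategory.{w} (FGModuleCat.{max u v} (T.BrauerAlgebra K))]
    (i j : T.Edge) (p q : ℤ) (Pi Pj : T.Db K) (hPi : T.IsProjStalk K Pi i p)
    (hPj : T.IsProjStalk K Pj j q) :
    ((∀ f : Pi ⟶ Pj⟦(-1 : ℤ)⟧, f = 0) ∧ (∀ f : Pj ⟶ Pi⟦(-1 : ℤ)⟧, f = 0)) ↔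
      (¬ T.OnCommonACycle K i j ∨ |p - q| ≠ 1) := by
  have hdiff : |p - q| = 1 ↔ p = q + 1 ∨ q = p + 1 := by
    rw [abs_eq zero_le_one]
    omega
  rw [← subsingleton_iff_forall_eq, ← subsingleton_iff_forall_eq,
    hPi.subsingleton_hom_shift_iff hPj, hPj.subsingleton_hom_shift_iff hPi,
    T.onCommonACycle_comm K j i, Ne, hdiff]
  tauto

theorem hom_between_stalks_vanishes_iff {K : Type u} [Field K] [IsAlgClosed K]
    {V : Type v} [Finite V] (T : BrauerTree V)
    [HasDerivedCategory.{w} (FGModuleCat.{max u v} (T.BrauerAlgebra K))]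
    (i j : T.Edge) (p q : ℤ) (hp : p = 0 ∨ p = 1) (hq : q = 0 ∨ q = 1)
    (Pi Pj : T.Db K) (hPi : T.IsProjStalk K Pi i p) (hPj : T.IsProjStalk K Pj j q) :
    ((∀ f : Pi ⟶ Pj⟦(-1 : ℤ)⟧, f = 0) ∧ (∀ f : Pj ⟶ Pi⟦(-1 : ℤ)⟧, f = 0)) ↔
      (¬ T.OnCommonACycle K i j ∨ (T.OnCommonACycle K i j ∧ p = q)) := by
  rw [hom_between_stalks_vanishes_iff_general T i j p q Pi Pj hPi hPj]
  rcases hp with rfl | rfl <;> rcases hq with rfl | rfl <;> simp [em']
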